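/- The equality =_RCCS is closed under localization: for all RCCS processes A, B and every channel a, if A =_RCCS B then (a)A =_RCCS (a)B. (Equivalently, the equivalence closure of {((a)A, (a)B) | A =_RCCS B} ∪ =_RCCS is a codivergent branching bisimulation.) -/

import Mathlib

/-!
Formalization of RCCS (Randomized CCS) following the paper
"A Uniform Framework for Probabilistic Process Models".
Channels form a type `Chan`; terms use de Bruijn indices for process variables.
-/

noncomputable section
open scoped Classical

/-- RCCS terms over a set of channels, with de Bruijn process variables.
`sum n α T` is the nondeterministic choice `Σ_{i∈[n]} α_i.T_i` (guards are
names `Sum.inl a` or conames `Sum.inr a`); `rand n p T` is the random choice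
`⊕_{i∈[n]} p_i τ.T_i`; `par` is composition, `loc a T` is localization `(a)T`,
and `fix T` is the fixpoint `μX.T`. -/
inductive Tm (Chan : Type) : Type
  | var : ℕ → Tm Chan
  | sum : (n : ℕ) → (Fin n → Chan ⊕ Chan) → (Fin n → Tm Chan) → Tm Chan
  | rand : (n : ℕ) → (Fin n → ℝ) → (Fin n → Tm Chan) → Tm Chan
  | par : Tm Chan → Tm Chan → Tm Chan
  | loc : Chan → Tm Chan → Tm Chan
  | fix : Tm Chan → Tm Chan

variable {Chan : Type}

/-- Labels: names, conames, and `tau p` for `p ∈ (0,1]`; `tau 1` is the plain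
silent action `τ`, identified with `1τ`. -/
inductive Lab (Chan : Type) : Type
  | name : Chan → Lab Chan
  | coname : Chan → Lab Chan
  | tau : ℝ → Lab Chan

/-- The label of an external prefix. -/
def guardLab : Chan ⊕ Chan → Lab Chan
  | .inl a => .name a
  | .inr a => .coname a

/-- A label is an action in `Act` if it is a name, a coname, or `τ = 1τ`. -/
def Lab.IsAct : Lab Chan → Prop
  | .name _ => True
  | .coname _ => True
  | .tau p => p = 1

/-- Shift de Bruijn indices `≥ c` up by one. -/
def Tm.lift : ℕ → Tm Chan → Tm Chan
  | c, .var n => .var (if n < c then n else n + 1)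
  | c, .sum n α T => .sum n α fun i => Tm.lift c (T i)
  | c, .rand n p T => .rand n p fun i => Tm.lift c (T i)
  | c, .par S T => .par (Tm.lift c S) (Tm.lift c T)
  | c, .loc a T => .loc a (Tm.lift c T)
  | c, .fix T => .fix (Tm.lift (c + 1) T)

/-- Capture-avoiding substitution of the term `S` for variable `c`
(other variables above `c` are shifted down). -/
def Tm.inst : ℕ → Tm Chan → Tm Chan → Tm Chan
  | c, S, .var n => if n < c then .var n else if n = c then S else .var (n - 1)
  | c, S, .sum n α T => .sum n α fun i => Tm.inst c S (T i)
  | c, S, .rand n p T => .rand n p fun i => Tm.inst c S (T i)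
  | c, S, .par S' T => .par (Tm.inst c S S') (Tm.inst c S T)
  | c, S, .loc a T => .loc a (Tm.inst c S T)
  | c, S, .fix T => .fix (Tm.inst (c + 1) (Tm.lift 0 S) T)

/-- All free variables are `< k`. -/
def Tm.ClosedAt : ℕ → Tm Chan → Prop
  | k, .var n => n < k
  | k, .sum _ _ T => ∀ i, Tm.ClosedAt k (T i)
  | k, .rand _ _ T => ∀ i, Tm.ClosedAt k (T i)
  | k, .par S T => Tm.ClosedAt k S ∧ Tm.ClosedAt k T
  | k, .loc _ T => Tm.ClosedAt k T
  | k, .fix T => Tm.ClosedAt (k + 1) T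

/-- Variable `v` is guarded: every free occurrence of `v` is under a prefix. -/
def Tm.Guarded : ℕ → Tm Chan → Prop
  | v, .var n => n ≠ v
  | _, .sum _ _ _ => True
  | _, .rand _ _ _ => True
  | v, .par S T => Tm.Guarded v S ∧ Tm.Guarded v T
  | v, .loc _ T => Tm.Guarded v T
  | v, .fix T => Tm.Guarded (v + 1) T

/-- Well-formedness: in every random choice `⊕_{i∈I} p_i τ.T_i` we have `|I| ≥ 2`,
`p_i ∈ (0,1)` and `Σ_i p_i = 1`; in every fixpoint `μX.T` the variable `X` is
guarded in `T`. -/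
def Tm.WF : Tm Chan → Prop
  | .var _ => True
  | .sum _ _ T => ∀ i, Tm.WF (T i)
  | .rand n p T => 2 ≤ n ∧ (∀ i, 0 < p i ∧ p i < 1) ∧ (∑ i, p i) = 1 ∧ ∀ i, Tm.WF (T i)
  | .par S T => Tm.WF S ∧ Tm.WF T
  | .loc _ T => Tm.WF T
  | .fix T => Tm.Guarded 0 T ∧ Tm.WF T

/-- A term with no random choice, i.e. a CCS term. -/
def Tm.NoRand : Tm Chan → Prop
  | .var _ => True
  | .sum _ _ T => ∀ i, Tm.NoRand (T i)
  | .rand _ _ _ => False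
  | .par S T => Tm.NoRand S ∧ Tm.NoRand T
  | .loc _ T => Tm.NoRand T
  | .fix T => Tm.NoRand T

/-- The transition relation of RCCS. -/
inductive Step : Tm Chan → Lab Chan → Tm Chan → Prop
  | sum {n α T} (i : Fin n) : Step (.sum n α T) (guardLab (α i)) (T i)
  | rand {n p T} (i : Fin n) : Step (.rand n p T) (.tau (p i)) (T i)
  | comL {S S' T T' a} : Step S (.name a) S' → Step T (.coname a) T' →
      Step (.par S T) (.tau 1) (.par S' T')
  | comR {S S' T T' a} : Step S (.coname a) S' → Step T (.name a) T' →
      Step (.par S T) (.tau 1) (.par S' T')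
  | parL {S S' T l} : Step S l S' → Step (.par S T) l (.par S' T)
  | parR {S T T' l} : Step T l T' → Step (.par S T) l (.par S T')
  | loc {T T' l} (a : Chan) : Step T l T' → l ≠ .name a → l ≠ .coname a →
      Step (.loc a T) l (.loc a T')
  | fix {T T' l} : Step (Tm.inst 0 (.fix T) T) l T' → Step (.fix T) l T'

/-- Collective silent transitions `B →^{∐_{i∈[n]} p_i τ} ∐_{i∈[n]} B_i`,
arising from a single random choice and closed under composition,
localization and recursion. -/
inductive CStep : Tm Chan → (n : ℕ) → (Fin n → ℝ) → (Fin n → Tm Chan) → Prop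
  | rand {n p T} : CStep (.rand n p T) n p T
  | parL {S T n p S'} : CStep S n p S' → CStep (.par S T) n p fun i => .par (S' i) T
  | parR {S T n p T'} : CStep T n p T' → CStep (.par S T) n p fun i => .par S (T' i)
  | loc {T n p T'} (a : Chan) : CStep T n p T' → CStep (.loc a T) n p fun i => .loc a (T' i)
  | fix {T n p T'} : CStep (Tm.inst 0 (.fix T) T) n p T' → CStep (.fix T) n p T'

/-- The set `P_RCCS` of RCCS processes: closed well-formed terms. -/
def Proc (Chan : Type) : Type := {T : Tm Chan // T.ClosedAt 0 ∧ T.WF}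

/-- A (potential) silent tree: nodes are addressed by reversed lists of child
indices (the root is `[]`, the `i`-th child of `σ` is `i :: σ`); each node
carries a process label and the probability labelling its incoming edge
(the root carries `1`). -/
structure PTree (Chan : Type) where
  node : List ℕ → Option (Proc Chan × ℝ)

namespace PTree

variable (t : PTree Chan)

/-- The address `σ` is a node of the tree. -/
def hasNode (σ : List ℕ) : Prop := (t.node σ).isSome

/-- The probability labelling the incoming edge of the node at `σ`. -/
def edgeProb (σ : List ℕ) : ℝ := ((t.node σ).map Prod.snd).getD 0

/-- The probability of the path from the root to `σ`: the product of the edge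
labels along it (`1` for the empty path). -/
def pathProb (t : PTree Chan) : List ℕ → ℝ
  | [] => 1
  | i :: σ => t.edgeProb (i :: σ) * pathProb t σ

/-- `σ` is a leaf. -/
def IsLeaf (σ : List ℕ) : Prop := t.hasNode σ ∧ ¬ t.hasNode (0 :: σ)

/-- `P(t↾_k)`: the sum of the probabilities of the branches of the truncation
of `t` at depth `k` (a branch of `t↾_k` ends either at depth `k` or at a leaf
of `t` of depth `< k`). -/
def truncProb (k : ℕ) : ℝ :=
  ∑' σ : List ℕ,
    if t.hasNode σ ∧ (σ.length = k ∨ (σ.length < k ∧ ¬ t.hasNode (0 :: σ)))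
    then t.pathProb σ else 0

/-- `P^k(t)`: the sum of the probabilities of the finite branches of `t` of
length at most `k`. -/
def finBranchProb (k : ℕ) : ℝ :=
  ∑' σ : List ℕ, if t.IsLeaf σ ∧ σ.length ≤ k then t.pathProb σ else 0

/-- `t` is regular: `P^f(t) = lim_k P^k(t) = 1`. -/
def Regular : Prop := Filter.Tendsto t.finBranchProb Filter.atTop (nhds 1)

/-- `t` is divergent: `P^f(t) = lim_k P^k(t) = 0`. -/
def Divergent : Prop := Filter.Tendsto t.finBranchProb Filter.atTop (nhds 0)

end PTree

/-- `t` is a silent tree of `A`: the root is labeled `A`, the node set is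
prefix-closed with children indexed by an initial segment of `ℕ`, the tree is
finitely branching, and every edge labeled `p` from `B` to `B'` satisfies
`p ∈ (0,1]` and `B →^{pτ} B'`. -/
def IsSilentTree (A : Proc Chan) (t : PTree Chan) : Prop :=
  t.node [] = some (A, 1) ∧
  (∀ i σ, t.hasNode (i :: σ) → t.hasNode σ) ∧
  (∀ i j σ, j ≤ i → t.hasNode (i :: σ) → t.hasNode (j :: σ)) ∧
  (∀ σ, ∃ n, ∀ i, n ≤ i → ¬ t.hasNode (i :: σ)) ∧
  (∀ σ i B p B' p', t.node σ = some (B, p) → t.node (i :: σ) = some (B', p') →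
    0 < p' ∧ p' ≤ 1 ∧ Step B.val (.tau p') B'.val)

/-- An ε-tree of `A` with regard to `E`: an `E`-tree of `A` (all node labels lie
in `[A]_E`) such that (1) any edge labeled `q < 1` out of a node `B` comes from a
collective random transition whose targets are exactly the children of `B`, and
(2) an edge labeled `1` out of `B` is a transition `B →^τ B'` to the unique
child `B'` of `B`. -/
def IsETree (E : Proc Chan → Proc Chan → Prop) (A : Proc Chan) (t : PTree Chan) : Prop :=
  IsSilentTree A t ∧
  (∀ σ B p, t.node σ = some (B, p) → E A B) ∧
  (∀ σ i B p B' q, t.node σ = some (B, p) → t.node (i :: σ) = some (B', q) → q < 1 →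
    ∃ n ps Ts, CStep B.val n ps Ts ∧
      (∀ j : ℕ, t.hasNode (j :: σ) ↔ j < n) ∧
      (∀ j : Fin n, ∃ C : Proc Chan, C.val = Ts j ∧ t.node ((j : ℕ) :: σ) = some (C, ps j))) ∧
  (∀ σ i B p B', t.node σ = some (B, p) → t.node (i :: σ) = some (B', 1) →
    Step B.val (.tau 1) B'.val ∧ i = 0 ∧ ¬ t.hasNode (1 :: σ))

/-- The `E`-class of `A`. -/
def classOf (E : Proc Chan → Proc Chan → Prop) (A : Proc Chan) : Set (Proc Chan) := {B | E A B}

/-- `C` is an equivalence class of `E`. -/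
def IsClass (E : Proc Chan → Proc Chan → Prop) (C : Set (Proc Chan)) : Prop :=
  ∃ A, C = classOf E A

/-- An equivalence `E` on `P_RCCS` is codivergent if for every `E`-class either
all members have a divergent ε-tree with regard to `E` or none does. -/
def Codivergent (E : Proc Chan → Proc Chan → Prop) : Prop :=
  ∀ A B, E A B →
    ((∃ t, IsETree E A t ∧ t.Divergent) ↔ (∃ t, IsETree E B t ∧ t.Divergent))

/-- An ℓ-transition `A ⇝_E →^ℓ C`: a regular ε-tree of `A` with regard to `E`
such that every leaf `L` has a transition `L →^ℓ L'` with `L' ∈ C`. -/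
def LTrans (E : Proc Chan → Proc Chan → Prop) (A : Proc Chan) (l : Lab Chan)
    (C : Set (Proc Chan)) : Prop :=
  ∃ t, IsETree E A t ∧ t.Regular ∧
    ∀ σ L p, t.node σ = some (L, p) → ¬ t.hasNode (0 :: σ) →
      ∃ L' ∈ C, Step L.val l L'.val

/-- The raw term `T` belongs to the set `C` of processes. -/
def inC (C : Set (Proc Chan)) (T : Tm Chan) : Prop := ∃ P ∈ C, P.val = T

/-- `P(L → C)` of a collective silent transition: the sum of the `p_i` whose
target lies in `C`. -/
def collProb (C : Set (Proc Chan)) {n : ℕ} (ps : Fin n → ℝ) (Ts : Fin n → Tm Chan) : ℝ :=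
  ∑ i, if inC C (Ts i) then ps i else 0

/-- A `q`-transition `A ⇝_E →^q C`: a regular ε-tree of `A` with regard to `E`
such that every leaf has a collective silent transition whose weighted
probability `P_E(L → C) = P(L → C)/(1 − P(L → [A]_E))` of reaching `C` is `q`. -/
def QTrans (E : Proc Chan → Proc Chan → Prop) (A : Proc Chan) (q : ℝ)
    (C : Set (Proc Chan)) : Prop :=
  ∃ t, IsETree E A t ∧ t.Regular ∧
    ∀ σ L p, t.node σ = some (L, p) → ¬ t.hasNode (0 :: σ) →
      ∃ (n : ℕ) (ps : Fin n → ℝ) (Ts : Fin n → Tm Chan), CStep L.val n ps Ts ∧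
        collProb C ps Ts / (1 - collProb (classOf E A) ps Ts) = q

/-- `E` is a branching bisimulation on `P_RCCS`: an equivalence such that
(1) ℓ-transitions with `ℓ ≠ τ ∨ C ≠ [A]_E` are bisimulated by all members of
`[A]_E`, and (2) likewise for `q`-transitions with `q ∈ (0,1]` and `C ≠ [A]_E`. -/
def IsBB (E : Proc Chan → Proc Chan → Prop) : Prop :=
  Equivalence E ∧
  (∀ A B l C, l.IsAct → IsClass E C → E A B → (l ≠ Lab.tau 1 ∨ C ≠ classOf E A) →
    LTrans E A l C → LTrans E B l C) ∧
  (∀ A B q C, 0 < q → q ≤ 1 → IsClass E C → E A B → C ≠ classOf E A →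
    QTrans E A q C → QTrans E B q C)

/-- `E` is a codivergent branching bisimulation on `P_RCCS`. -/
def IsCBB (E : Proc Chan → Proc Chan → Prop) : Prop := IsBB E ∧ Codivergent E

/-- `=_RCCS`, the largest codivergent branching bisimulation: the union of all
codivergent branching bisimulations. -/
def RccsEq (A B : Proc Chan) : Prop := ∃ E, IsCBB E ∧ E A B

/-- The localization `(a)A` of a process. -/
def Proc.loc (a : Chan) (A : Proc Chan) : Proc Chan :=
  ⟨.loc a A.val, A.prop.1, A.prop.2⟩

/-!
Given a codivergent branching bisimulation `E`, relate `(a)A` to `(a)B` whenever `E A B`, and every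
other process only to itself. All nodes of an ε-tree stay in the class of its root, so an ε-tree of
`(a)A` for this relation consists of localizations; erasing `(a)` from them gives an ε-tree of `A`
for `E`. Localization never blocks silent steps, so this correspondence of ε-trees is bijective and
preserves all path probabilities. A transition of `(a)A` into a class `C` thus amounts to one of `A`
into `{B | (a)B ∈ C}`, which is an `E`-class or empty; it cannot be empty, because a regular tree
has a leaf, from which `C` is reached.
-/

section ReflMap

variable {α β : Type*} {f : α → β} {r : α → α → Prop}

/-- The reflexive closure of the image of `r` under `f`. With `f` localization and `r` a codivergent
branching bisimulation, it witnesses that localization preserves `=_RCCS`. It is already the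
equivalence closure of the image when `f` is injective and `r` is an equivalence. -/
def ReflMap (f : α → β) (r : α → α → Prop) : β → β → Prop :=
  Relation.ReflGen (Relation.Map r f f)

theorem reflMap_apply_left (hf : f.Injective) (hr : ∀ x, r x x) {x : α} {y : β} :
    ReflMap f r (f x) y ↔ ∃ x', r x x' ∧ f x' = y := by
  constructor
  · rintro (_ | ⟨x₀, x', hr', hx₀, rfl⟩)
    · exact ⟨x, hr x, rfl⟩
    · exact ⟨x', hf hx₀ ▸ hr', rfl⟩
  · rintro ⟨x', hr', rfl⟩
    exact .single ⟨x, x', hr', rfl, rfl⟩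

theorem reflMap_apply_apply (hf : f.Injective) (hr : ∀ x, r x x) {x x' : α} :
    ReflMap f r (f x) (f x') ↔ r x x' := by
  simp only [reflMap_apply_left hf hr, hf.eq_iff, exists_eq_right]

theorem reflMap_equivalence (hf : f.Injective) (hr : Equivalence r) :
    Equivalence (ReflMap f r) where
  refl _ := .refl
  symm := by
    rintro _ _ (_ | ⟨x, x', h, rfl, rfl⟩)
    · exact .refl
    · exact .single ⟨x', x, hr.symm h, rfl, rfl⟩
  trans := by
    rintro _ _ z (_ | ⟨x, x', h, rfl, rfl⟩) hz
    · exact hz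
    · obtain ⟨x'', h', rfl⟩ := (reflMap_apply_left hf hr.refl).1 hz
      exact .single ⟨x, x'', hr.trans h h', rfl, rfl⟩

end ReflMap

theorem IsClass.eq_classOf {E : Proc Chan → Proc Chan → Prop} (hE : Equivalence E)
    {C : Set (Proc Chan)} (hC : IsClass E C) {A : Proc Chan} (hA : A ∈ C) : C = classOf E A := by
  obtain ⟨B, rfl⟩ := hC
  ext D
  exact ⟨hE.trans (hE.symm hA), hE.trans hA⟩

namespace PTree

variable {Chan' : Type} (f : Proc Chan → Proc Chan') (t : PTree Chan)

/-- Relabelling of the nodes of a tree along `f`; shape and edge probabilities are unchanged. -/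
def map : PTree Chan' :=
  ⟨fun σ => (t.node σ).map (Prod.map f id)⟩

theorem node_map_eq_some {σ : List ℕ} {P : Proc Chan'} {p : ℝ} :
    (t.map f).node σ = some (P, p) ↔ ∃ A, t.node σ = some (A, p) ∧ f A = P := by
  simp [map]

theorem hasNode_map : (t.map f).hasNode = t.hasNode := by
  funext σ
  simp only [hasNode, map, Option.isSome_map]

theorem isLeaf_map : (t.map f).IsLeaf = t.IsLeaf := by
  funext σ
  simp only [IsLeaf, hasNode_map]

theorem edgeProb_map : (t.map f).edgeProb = t.edgeProb := by
  funext σ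
  simp only [edgeProb, map, Option.map_map, Prod.map_snd', Function.id_comp]

theorem pathProb_map : (t.map f).pathProb = t.pathProb := by
  funext σ
  induction σ with
  | nil => rfl
  | cons i σ ih => simp only [pathProb, edgeProb_map, ih]

theorem finBranchProb_map : (t.map f).finBranchProb = t.finBranchProb := by
  unfold finBranchProb
  rw [isLeaf_map, pathProb_map]

theorem regular_map : (t.map f).Regular ↔ t.Regular := by
  simp only [Regular, finBranchProb_map]

theorem divergent_map : (t.map f).Divergent ↔ t.Divergent := by
  simp only [Divergent, finBranchProb_map]

variable {f t}

theorem node_map_eq_some_apply (hf : f.Injective) {σ : List ℕ} {A : Proc Chan} {p : ℝ} :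
    (t.map f).node σ = some (f A, p) ↔ t.node σ = some (A, p) := by
  simp only [node_map_eq_some, hf.eq_iff, exists_eq_right]

theorem forall_node_map_iff {σ : List ℕ} {φ : Proc Chan' → ℝ → Prop} :
    (∀ P p, (t.map f).node σ = some (P, p) → φ P p) ↔
      ∀ A p, t.node σ = some (A, p) → φ (f A) p := by
  simp only [node_map_eq_some]
  constructor
  · exact fun h A p hA => h _ p ⟨A, hA, rfl⟩
  · rintro h _ p ⟨A, hA, rfl⟩
    exact h A p hA

theorem forall_edge_map_iff {σ τ : List ℕ} {φ : Proc Chan' → ℝ → Proc Chan' → ℝ → Prop} :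
    (∀ P p P' p', (t.map f).node σ = some (P, p) → (t.map f).node τ = some (P', p') →
      φ P p P' p') ↔
    ∀ A p A' p', t.node σ = some (A, p) → t.node τ = some (A', p') → φ (f A) p (f A') p' := by
  simp only [node_map_eq_some]
  constructor
  · exact fun h A p A' p' hA hA' => h _ p _ p' ⟨A, hA, rfl⟩ ⟨A', hA', rfl⟩
  · rintro h _ p _ p' ⟨A, hA, rfl⟩ ⟨A', hA', rfl⟩
    exact h A p A' p' hA hA'

theorem exists_map_eq {u : PTree Chan'}
    (h : ∀ σ P p, u.node σ = some (P, p) → P ∈ Set.range f) : ∃ s : PTree Chan, s.map f = u := by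
  have hnode (σ : List ℕ) : ∃ o : Option (Proc Chan × ℝ), o.map (Prod.map f id) = u.node σ := by
    rcases hσ : u.node σ with _ | ⟨P, p⟩
    · exact ⟨none, rfl⟩
    · obtain ⟨A, rfl⟩ := h σ P p hσ
      exact ⟨some (A, p), rfl⟩
  choose node hnode using hnode
  exact ⟨⟨node⟩, congrArg PTree.mk (funext hnode)⟩

theorem Regular.exists_isLeaf (ht : t.Regular) : ∃ σ, t.IsLeaf σ := by
  by_contra! hleaf
  have hzero : t.finBranchProb = fun _ => 0 := by
    funext k
    simp only [finBranchProb, hleaf, false_and, if_false, tsum_zero]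
  rw [Regular, hzero] at ht
  exact zero_ne_one (tendsto_nhds_unique tendsto_const_nhds ht)

end PTree

/-- The children of the node `σ` are exactly the outcomes, with their probabilities, of one
collective silent transition of `B`: the conclusion of condition (1) on ε-trees. -/
def PTree.IsCollectiveBranching (t : PTree Chan) (σ : List ℕ) (B : Proc Chan) : Prop :=
  ∃ n ps Ts, CStep B.val n ps Ts ∧
    (∀ j : ℕ, t.hasNode (j :: σ) ↔ j < n) ∧
    ∀ j : Fin n, ∃ C : Proc Chan, C.val = Ts j ∧ t.node ((j : ℕ) :: σ) = some (C, ps j)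

theorem isETree_iff {E : Proc Chan → Proc Chan → Prop} {A : Proc Chan} {t : PTree Chan} :
    IsETree E A t ↔ IsSilentTree A t ∧
      (∀ σ B p, t.node σ = some (B, p) → E A B) ∧
      ∀ σ i B p B' q, t.node σ = some (B, p) → t.node (i :: σ) = some (B', q) →
        (q < 1 → t.IsCollectiveBranching σ B) ∧
        (q = 1 → Step B.val (.tau 1) B'.val ∧ i = 0 ∧ ¬ t.hasNode (1 :: σ)) := by
  refine and_congr_right fun _ => and_congr_right fun _ => ⟨?_, fun h => ⟨?_, ?_⟩⟩
  · rintro ⟨hrandom, htau⟩ σ i B p B' q hB hB'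
    exact ⟨hrandom σ i B p B' q hB hB', fun hq => htau σ i B p B' hB (hq ▸ hB')⟩
  · exact fun σ i B p B' q hB hB' => (h σ i B p B' q hB hB').1
  · exact fun σ i B p B' hB hB' => (h σ i B p B' 1 hB hB').2 rfl

/-- The prefix `A ⇝_E` shared by ℓ- and `q`-transitions: `A` has a regular ε-tree all of whose
leaves satisfy `φ`. -/
def SilentlyReaches (E : Proc Chan → Proc Chan → Prop) (A : Proc Chan) (φ : Proc Chan → Prop) :
    Prop :=
  ∃ t, IsETree E A t ∧ t.Regular ∧
    ∀ σ L p, t.node σ = some (L, p) → ¬ t.hasNode (0 :: σ) → φ L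

section Transitions

variable {E : Proc Chan → Proc Chan → Prop} {A : Proc Chan} {C : Set (Proc Chan)}

theorem lTrans_iff_silentlyReaches {l : Lab Chan} :
    LTrans E A l C ↔ SilentlyReaches E A fun L => ∃ L' ∈ C, Step L.val l L'.val :=
  Iff.rfl

theorem qTrans_iff_silentlyReaches {q : ℝ} :
    QTrans E A q C ↔ SilentlyReaches E A fun L =>
      ∃ (n : ℕ) (ps : Fin n → ℝ) (Ts : Fin n → Tm Chan), CStep L.val n ps Ts ∧
        collProb C ps Ts / (1 - collProb (classOf E A) ps Ts) = q :=
  Iff.rfl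

theorem SilentlyReaches.exists {φ : Proc Chan → Prop} (h : SilentlyReaches E A φ) : ∃ L, φ L := by
  obtain ⟨t, -, ht, hφ⟩ := h
  obtain ⟨σ, hσ, hleaf⟩ := ht.exists_isLeaf
  obtain ⟨⟨L, p⟩, hL⟩ := Option.isSome_iff_exists.1 hσ
  exact ⟨L, hφ σ L p hL hleaf⟩

theorem LTrans.nonempty {l : Lab Chan} (h : LTrans E A l C) : C.Nonempty := by
  obtain ⟨_, L', hL', -⟩ := (lTrans_iff_silentlyReaches.1 h).exists
  exact ⟨L', hL'⟩

theorem collProb_empty {n : ℕ} (ps : Fin n → ℝ) (Ts : Fin n → Tm Chan) :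
    collProb ∅ ps Ts = 0 := by
  simp [collProb, inC]

theorem QTrans.nonempty {q : ℝ} (hq : q ≠ 0) (h : QTrans E A q C) : C.Nonempty := by
  rw [Set.nonempty_iff_ne_empty]
  rintro rfl
  obtain ⟨_, n, ps, Ts, -, hprob⟩ := (qTrans_iff_silentlyReaches.1 h).exists
  rw [collProb_empty, zero_div] at hprob
  exact hq hprob.symm

end Transitions

section Loc

variable {a : Chan}

theorem Tm.step_loc_iff {T U : Tm Chan} {l : Lab Chan} :
    Step (.loc a T) l U ↔ (l ≠ .name a ∧ l ≠ .coname a) ∧ ∃ T', Step T l T' ∧ .loc a T' = U := by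
  constructor
  · rintro (_ | _ | _ | _ | _ | _ | ⟨_, hT, hname, hconame⟩)
    exact ⟨⟨hname, hconame⟩, _, hT, rfl⟩
  · rintro ⟨⟨hname, hconame⟩, T', hT, rfl⟩
    exact .loc a hT hname hconame

theorem Tm.cStep_loc_iff {T : Tm Chan} {n : ℕ} {ps : Fin n → ℝ} {Us : Fin n → Tm Chan} :
    CStep (.loc a T) n ps Us ↔ ∃ Ts, CStep T n ps Ts ∧ (fun i => .loc a (Ts i)) = Us := by
  constructor
  · rintro (_ | _ | _ | ⟨_, hT⟩)
    exact ⟨_, hT, rfl⟩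
  · rintro ⟨Ts, hT, rfl⟩
    exact .loc a hT

theorem Proc.val_eq_loc_iff {P : Proc Chan} {T : Tm Chan} :
    P.val = .loc a T ↔ ∃ A : Proc Chan, A.val = T ∧ Proc.loc a A = P := by
  constructor
  · intro hP
    have hT : T.ClosedAt 0 ∧ T.WF := by
      have hprop := P.prop
      rwa [hP] at hprop
    exact ⟨⟨T, hT⟩, rfl, Subtype.ext hP.symm⟩
  · rintro ⟨A, rfl, rfl⟩
    rfl

theorem Proc.loc_injective (a : Chan) : Function.Injective (Proc.loc a) := by
  intro A B h
  exact Subtype.ext (Tm.loc.inj (congrArg Subtype.val h)).2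

theorem Proc.step_loc_iff {A P : Proc Chan} {l : Lab Chan} :
    Step (Proc.loc a A).val l P.val ↔
      (l ≠ .name a ∧ l ≠ .coname a) ∧ ∃ B : Proc Chan, Step A.val l B.val ∧ Proc.loc a B = P := by
  rw [Proc.loc, Tm.step_loc_iff]
  refine and_congr_right fun _ => ⟨?_, ?_⟩
  · rintro ⟨T, hT, hP⟩
    obtain ⟨B, rfl, rfl⟩ := Proc.val_eq_loc_iff.1 hP.symm
    exact ⟨B, hT, rfl⟩
  · rintro ⟨B, hB, rfl⟩
    exact ⟨B.val, hB, rfl⟩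

theorem Proc.step_tau_loc_loc_iff {A B : Proc Chan} {p : ℝ} :
    Step (Proc.loc a A).val (.tau p) (Proc.loc a B).val ↔ Step A.val (.tau p) B.val := by
  simp [Proc.step_loc_iff, (Proc.loc_injective a).eq_iff]

theorem inC_loc {C : Set (Proc Chan)} {T : Tm Chan} :
    inC C (.loc a T) ↔ inC (Proc.loc a ⁻¹' C) T := by
  simp only [inC, Proc.val_eq_loc_iff, ↓existsAndEq, and_true, Set.mem_preimage]

theorem collProb_loc {C : Set (Proc Chan)} {n : ℕ} (ps : Fin n → ℝ) (Ts : Fin n → Tm Chan) :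
    collProb C ps (fun i => .loc a (Ts i)) = collProb (Proc.loc a ⁻¹' C) ps Ts := by
  simp only [collProb, inC_loc]

theorem exists_mem_step_loc_iff {A : Proc Chan} {l : Lab Chan} {C : Set (Proc Chan)} :
    (∃ P ∈ C, Step (Proc.loc a A).val l P.val) ↔
      (l ≠ .name a ∧ l ≠ .coname a) ∧ ∃ B ∈ Proc.loc a ⁻¹' C, Step A.val l B.val := by
  simp only [Proc.step_loc_iff, Set.mem_preimage, ↓existsAndEq, and_true, and_left_comm,
    exists_and_left]

theorem exists_cStep_loc_iff {A : Proc Chan}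
    {φ : ∀ n : ℕ, (Fin n → ℝ) → (Fin n → Tm Chan) → Prop} :
    (∃ n ps Us, CStep (Proc.loc a A).val n ps Us ∧ φ n ps Us) ↔
      ∃ n ps Ts, CStep A.val n ps Ts ∧ φ n ps fun i => .loc a (Ts i) := by
  simp only [Proc.loc, Tm.cStep_loc_iff, ↓existsAndEq, and_true]

theorem isSilentTree_map_loc_iff {A : Proc Chan} {t : PTree Chan} :
    IsSilentTree (Proc.loc a A) (t.map (Proc.loc a)) ↔ IsSilentTree A t := by
  simp only [IsSilentTree, PTree.hasNode_map, PTree.forall_edge_map_iff,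
    PTree.node_map_eq_some_apply (Proc.loc_injective a), Proc.step_tau_loc_loc_iff]

theorem PTree.isCollectiveBranching_map_loc_iff {t : PTree Chan} {σ : List ℕ} {B : Proc Chan} :
    (t.map (Proc.loc a)).IsCollectiveBranching σ (Proc.loc a B) ↔
      t.IsCollectiveBranching σ B := by
  have hchild (T : Tm Chan) (τ : List ℕ) (p : ℝ) :
      (∃ P : Proc Chan, P.val = .loc a T ∧ (t.map (Proc.loc a)).node τ = some (P, p)) ↔
        ∃ C : Proc Chan, C.val = T ∧ t.node τ = some (C, p) := by
    simp only [Proc.val_eq_loc_iff, ↓existsAndEq, and_true,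
      node_map_eq_some_apply (Proc.loc_injective a)]
  simp only [IsCollectiveBranching, exists_cStep_loc_iff, hasNode_map, hchild]

section ReflMapLoc

variable {E : Proc Chan → Proc Chan → Prop} {A : Proc Chan} {C : Set (Proc Chan)}

theorem isETree_map_loc_iff (hE : ∀ A, E A A) {t : PTree Chan} :
    IsETree (ReflMap (Proc.loc a) E) (Proc.loc a A) (t.map (Proc.loc a)) ↔ IsETree E A t := by
  simp only [isETree_iff, isSilentTree_map_loc_iff, PTree.forall_node_map_iff,
    PTree.forall_edge_map_iff, PTree.hasNode_map, PTree.isCollectiveBranching_map_loc_iff,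
    Proc.step_tau_loc_loc_iff, reflMap_apply_apply (Proc.loc_injective a) hE]

theorem exists_isETree_loc_iff (hE : ∀ A, E A A) {φ : PTree Chan → Prop} :
    (∃ t, IsETree (ReflMap (Proc.loc a) E) (Proc.loc a A) t ∧ φ t) ↔
      ∃ s, IsETree E A s ∧ φ (s.map (Proc.loc a)) := by
  constructor
  · rintro ⟨t, ht, hφ⟩
    have hrange (σ : List ℕ) (P : Proc Chan) (p : ℝ) (hP : t.node σ = some (P, p)) :
        P ∈ Set.range (Proc.loc a) := by
      obtain ⟨B, -, rfl⟩ :=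
        (reflMap_apply_left (Proc.loc_injective a) hE).1 (ht.2.1 σ P p hP)
      exact ⟨B, rfl⟩
    obtain ⟨s, rfl⟩ := PTree.exists_map_eq hrange
    exact ⟨s, (isETree_map_loc_iff hE).1 ht, hφ⟩
  · rintro ⟨s, hs, hφ⟩
    exact ⟨s.map (Proc.loc a), (isETree_map_loc_iff hE).2 hs, hφ⟩

theorem exists_divergent_loc_iff (hE : ∀ A, E A A) :
    (∃ t, IsETree (ReflMap (Proc.loc a) E) (Proc.loc a A) t ∧ t.Divergent) ↔
      ∃ t, IsETree E A t ∧ t.Divergent := by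
  simp only [exists_isETree_loc_iff hE, PTree.divergent_map]

theorem silentlyReaches_loc_iff (hE : ∀ A, E A A) {φ : Proc Chan → Prop} :
    SilentlyReaches (ReflMap (Proc.loc a) E) (Proc.loc a A) φ ↔
      SilentlyReaches E A fun L => φ (Proc.loc a L) := by
  simp only [SilentlyReaches, exists_isETree_loc_iff hE, PTree.regular_map, PTree.hasNode_map,
    PTree.forall_node_map_iff]

theorem preimage_loc_classOf (hE : ∀ A, E A A) :
    Proc.loc a ⁻¹' classOf (ReflMap (Proc.loc a) E) (Proc.loc a A) = classOf E A :=
  Set.ext fun _ => reflMap_apply_apply (Proc.loc_injective a) hE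

theorem isClass_preimage_loc (hE : Equivalence E) (hC : IsClass (ReflMap (Proc.loc a) E) C)
    (hne : (Proc.loc a ⁻¹' C).Nonempty) : IsClass E (Proc.loc a ⁻¹' C) := by
  obtain ⟨B, hB⟩ := hne
  rw [hC.eq_classOf (reflMap_equivalence (Proc.loc_injective a) hE) hB]
  exact ⟨B, preimage_loc_classOf hE.refl⟩

theorem preimage_loc_ne_classOf (hE : Equivalence E) (hC : IsClass (ReflMap (Proc.loc a) E) C)
    (hne : C ≠ classOf (ReflMap (Proc.loc a) E) (Proc.loc a A)) :
    Proc.loc a ⁻¹' C ≠ classOf E A := by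
  intro h
  have hA : A ∈ Proc.loc a ⁻¹' C := h ▸ hE.refl A
  exact hne (hC.eq_classOf (reflMap_equivalence (Proc.loc_injective a) hE) hA)

theorem lTrans_loc_iff (hE : ∀ A, E A A) {l : Lab Chan} :
    LTrans (ReflMap (Proc.loc a) E) (Proc.loc a A) l C ↔
      (l ≠ .name a ∧ l ≠ .coname a) ∧ LTrans E A l (Proc.loc a ⁻¹' C) := by
  simp only [lTrans_iff_silentlyReaches, silentlyReaches_loc_iff hE, exists_mem_step_loc_iff]
  by_cases hl : l ≠ .name a ∧ l ≠ .coname a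
  · simp only [hl, ne_eq, not_false_eq_true, and_self, true_and]
  · simp only [hl, false_and, iff_false]
    exact fun h => h.exists.elim fun _ => id

theorem qTrans_loc_iff (hE : ∀ A, E A A) {q : ℝ} :
    QTrans (ReflMap (Proc.loc a) E) (Proc.loc a A) q C ↔ QTrans E A q (Proc.loc a ⁻¹' C) := by
  simp only [qTrans_iff_silentlyReaches, silentlyReaches_loc_iff hE, exists_cStep_loc_iff,
    collProb_loc, preimage_loc_classOf hE]

theorem isBB_reflMap_loc (hE : IsBB E) : IsBB (ReflMap (Proc.loc a) E) := by
  obtain ⟨hequiv, hlTrans, hqTrans⟩ := hE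
  refine ⟨reflMap_equivalence (Proc.loc_injective a) hequiv, ?_, ?_⟩
  · rintro _ _ l C hl hC (_ | ⟨A, B, hAB, rfl, rfl⟩) hne h
    · exact h
    · rw [lTrans_loc_iff hequiv.refl] at h ⊢
      exact ⟨h.1, hlTrans A B l _ hl (isClass_preimage_loc hequiv hC h.2.nonempty) hAB
        (hne.imp_right (preimage_loc_ne_classOf hequiv hC)) h.2⟩
  · rintro _ _ q C hq hq1 hC (_ | ⟨A, B, hAB, rfl, rfl⟩) hne h
    · exact h
    · rw [qTrans_loc_iff hequiv.refl] at h ⊢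
      exact hqTrans A B q _ hq hq1 (isClass_preimage_loc hequiv hC (h.nonempty hq.ne')) hAB
        (preimage_loc_ne_classOf hequiv hC hne) h

theorem codivergent_reflMap_loc (hE : ∀ A, E A A) (h : Codivergent E) :
    Codivergent (ReflMap (Proc.loc a) E) := by
  rintro _ _ (_ | ⟨A, B, hAB, rfl, rfl⟩)
  · exact Iff.rfl
  · simpa only [exists_divergent_loc_iff hE] using h A B hAB

theorem isCBB_reflMap_loc (hE : IsCBB E) : IsCBB (ReflMap (Proc.loc a) E) :=
  ⟨isBB_reflMap_loc hE.1, codivergent_reflMap_loc hE.1.1.refl hE.2⟩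

end ReflMapLoc

end Loc

/-- `=_RCCS` is closed under localization. -/
theorem rccsEq_loc {Chan : Type} (a : Chan) (A B : Proc Chan) (h : RccsEq A B) :
    RccsEq (Proc.loc a A) (Proc.loc a B) := by
  obtain ⟨E, hE, hAB⟩ := h
  exact ⟨ReflMap (Proc.loc a) E, isCBB_reflMap_loc hE, .single ⟨A, B, hAB, rfl, rfl⟩⟩
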